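/- Let k ≥ 3 and n ≥ 3k·binomial(2k, k). Let F be a (3, 2k)-conditionally intersecting family of k-element subsets of [n] such that every member F of F contains a (k−1)-element subset that is contained in no other member of F, and let A, B ∈ F be disjoint. Then the number of members F of F with |F ∩ (A ∪ B)| ≤ k−1 is at most binomial(n−k−1, k−1) − 1; equivalently, Σ_{i=0}^{k−1} |F_i| ≤ Σ_{i=1}^{k−1} binomial(n−2k, k−i)·binomial(k−1, i−1), where F_i = {F ∈ F : |F ∩ (A ∪ B)| = i}. -/

import Mathlib

/-- A family `F` of finsets is `(d, s)`-conditionally intersecting if there do not exist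
`d` distinct members of `F` whose union has size at most `s` and whose intersection is empty. -/
def CondIntersecting {n : ℕ} (d s : ℕ) (F : Finset (Finset (Fin n))) : Prop :=
  ¬ ∃ D ⊆ F, D.card = d ∧ (D.sup id).card ≤ s ∧ D.inf id = ∅

/-!
Let `D = A ∪ B`, let `g S` be the `k - 1` elements of `S` contained in no other member, and let
`𝒢` be the family of all `g S`, which has the size of `F`. Its members avoiding `D` number at most
`(n - 2k).choose (k - 1)`, and those meeting `D` in two or more points are of lower order. For a
`(k - 2)`-set `E` outside `D`, at most `k - 1` members of `𝒢` consist of `E` and one point of `D`: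
two of them, coming from members `E ∪ {c, x}` and `E ∪ {d, y}` of `F`, have with `A` or with `B` a
union of size at most `2k` unless their points are in a very special position. So `F` has about
`(n - 2k).choose (k - 1) + (k - 1) * (n - 2k).choose (k - 2)` members at most, and this is less than
`(n - k - 1).choose (k - 1)`.

The lower-order term matters only if almost every `E` attains the maximum `k - 1`. Then many `E`
form a star: for some `u` in `A`, say, all `E ∪ {u, a}` with `a ∈ A \ {u}` belong to `F`. If a
member `T` that leaves `D` misses `u`, then for every star `E` disjoint from `T` and every
`y ∈ T \ D` the set `E ∪ {y}` is not in `𝒢`, and these missing sets outweigh the lower-order term.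
Otherwise all members that leave `D` contain `u`. Trading each member through `u` that meets `B`
for `k`-sets through `u` that avoid `B` and are not in `F` bounds the number of members through `u`
by the number `(n - k - 1).choose (k - 1)` of `k`-sets through `u` avoiding `B`, and `A` is one
such member that does not leave `D`.
-/

open Finset

section Binomials

theorem sum_Icc_choose_mul_choose_add_one (N m : ℕ) :
    ∑ i ∈ Icc 1 m, N.choose (m + 1 - i) * m.choose (i - 1) + 1 = (N + m).choose m := by
  have hshift : ∑ i ∈ Icc 1 m, N.choose (m + 1 - i) * m.choose (i - 1) =
      ∑ j ∈ range m, m.choose j * N.choose (m - j) := by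
    rw [range_eq_Ico, ← Ico_add_one_right_eq_Icc, ← zero_add 1,
      ← sum_Ico_add' (fun i ↦ N.choose (m + 1 - i) * m.choose (i - 1)) 0 m 1]
    exact sum_congr rfl fun j _ ↦ by rw [Nat.add_sub_add_right, Nat.add_sub_cancel, mul_comm]
  rw [hshift, add_comm N m, Nat.add_choose_eq, Nat.sum_antidiagonal_eq_sum_range_succ_mk,
    sum_range_succ, Nat.choose_self, Nat.sub_self, Nat.choose_zero_right, one_mul]

theorem choose_add_mul_choose_lt (N : ℕ) {m : ℕ} (hm : 2 ≤ m) :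
    N.choose m + m * N.choose (m - 1) < (N + m).choose m := by
  have hpair : ({1, 2} : Finset ℕ) ⊆ Icc 1 m := by
    intro i hi
    simp only [mem_insert, mem_singleton] at hi
    rw [mem_Icc]
    omega
  have hsum := sum_le_sum_of_subset (f := fun i ↦ N.choose (m + 1 - i) * m.choose (i - 1)) hpair
  rw [sum_pair (by decide)] at hsum
  simp only [Nat.add_sub_cancel, Nat.sub_self, Nat.choose_zero_right, mul_one,
    Nat.choose_one_right, Nat.reduceSub, Nat.reduceSubDiff] at hsum
  rw [mul_comm m]
  have := sum_Icc_choose_mul_choose_add_one N m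
  omega

theorem choose_add_le_choose_add_mul (N t m : ℕ) :
    (N + t).choose (m + 1) ≤ N.choose (m + 1) + t * (N + t).choose m := by
  induction t with
  | zero => simp
  | succ t ih =>
    have hmono : (N + t).choose m ≤ (N + (t + 1)).choose m := Nat.choose_le_choose _ (by omega)
    calc (N + (t + 1)).choose (m + 1) = (N + t).choose (m + 1) + (N + t).choose m := by
          rw [← add_assoc, Nat.choose_succ_succ, add_comm]
      _ ≤ N.choose (m + 1) + t * (N + t).choose m + (N + t).choose m := by gcongr
      _ = N.choose (m + 1) + (t + 1) * (N + t).choose m := by ring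
      _ ≤ N.choose (m + 1) + (t + 1) * (N + (t + 1)).choose m := by gcongr

theorem mul_choose_lt_choose_succ {n p M : ℕ} (h : (p + 1) * M + p < n) :
    M * n.choose p < n.choose (p + 1) := by
  refine Nat.lt_of_mul_lt_mul_left (a := p + 1) ?_
  calc (p + 1) * (M * n.choose p) = n.choose p * ((p + 1) * M) := by ring
    _ < n.choose p * (n - p) :=
      Nat.mul_lt_mul_of_pos_left (by omega) (Nat.choose_pos (by omega))
    _ = (p + 1) * n.choose (p + 1) := by rw [← Nat.choose_succ_right_eq, mul_comm]

theorem choose_two_mul_two_add (k : ℕ) : (2 * k).choose 2 + k = 2 * k ^ 2 := by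
  rw [Nat.choose_two_right, mul_assoc, Nat.mul_div_cancel_left _ two_pos]
  cases k with
  | zero => rfl
  | succ k =>
    rw [show 2 * (k + 1) - 1 = 2 * k + 1 by omega]
    ring

theorem mul_choose_mul_choose_le {k m j : ℕ} (hj : 1 ≤ j) (hm : k ^ 3 ≤ m + 1) :
    k * (k.choose j * k.choose j) ≤ (m + j).choose j := by
  refine Nat.le_of_mul_le_mul_left (c := j.factorial) ?_ j.factorial_pos
  have hk : k ≤ k ^ j := Nat.le_self_pow (by omega) k
  have hchoose : k.choose j ≤ k ^ j := Nat.choose_le_pow k j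
  calc j.factorial * (k * (k.choose j * k.choose j))
      = k * k.choose j * k.descFactorial j := by
        rw [Nat.descFactorial_eq_factorial_mul_choose]
        ring
    _ ≤ k ^ j * k ^ j * k ^ j := by gcongr; exact Nat.descFactorial_le_pow k j
    _ = (k ^ 3) ^ j := by ring
    _ ≤ (m + j + 1 - j) ^ j := by gcongr; omega
    _ ≤ (m + j).descFactorial j := Nat.pow_sub_le_descFactorial _ _
    _ = j.factorial * (m + j).choose j := Nat.descFactorial_eq_factorial_mul_choose _ _

theorem mul_choose_add_mul_choose_lt {n k : ℕ} (hk : 3 ≤ k) (hn : 6 * k ^ 3 * (k - 2) ≤ n) :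
    (k - 1) * ((2 * k).choose 2 * n.choose (k - 3)) + 2 * k * (2 * k ^ 2 * n.choose (k - 3)) <
      (n - 2 * k).choose (k - 2) := by
  obtain ⟨p, rfl⟩ : ∃ p, k = p + 3 := ⟨k - 3, by omega⟩
  simp only [Nat.add_sub_cancel, Nat.reduceSubDiff] at hn ⊢
  set c := (2 * (p + 3)).choose 2
  have hc : c + (p + 3) = 2 * (p + 3) ^ 2 := choose_two_mul_two_add (p + 3)
  have hsize : (p + 1) * ((p + 2) * c + 2 * (p + 3) * (2 * (p + 3) ^ 2) + 2 * (p + 3)) + p < n := by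
    have hc' : c = (p + 3) * (2 * p + 5) := by
      ring_nf at hc ⊢
      omega
    rw [hc']
    refine lt_of_lt_of_le ?_ hn
    nlinarith [Nat.zero_le (p ^ 2), Nat.zero_le (p ^ 3)]
  have hle : 2 * (p + 3) ≤ n := by
    refine le_trans ?_ hn
    have := Nat.le_self_pow (three_ne_zero) (p + 3)
    nlinarith
  have hshift := choose_add_le_choose_add_mul (n - 2 * (p + 3)) (2 * (p + 3)) p
  rw [Nat.sub_add_cancel hle] at hshift
  have hlt := mul_choose_lt_choose_succ hsize
  rw [add_mul, add_mul, mul_assoc (p + 2), mul_assoc (2 * (p + 3)) (2 * (p + 3) ^ 2)] at hlt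
  omega

theorem two_mul_sq_mul_sub_two_le_centralBinom {k : ℕ} (hk : 3 ≤ k) :
    2 * k ^ 2 * (k - 2) ≤ k.centralBinom := by
  obtain rfl | hk := hk.eq_or_lt
  · decide
  induction k, hk using Nat.le_induction with
  | base => decide
  | succ k hk ih =>
    have hgrowth : 3 * k.centralBinom ≤ (k + 1).centralBinom := by
      refine Nat.le_of_mul_le_mul_left (c := k + 1) ?_ k.succ_pos
      rw [Nat.succ_mul_centralBinom_succ, ← mul_assoc]
      exact Nat.mul_le_mul_right _ (by omega)
    obtain ⟨j, rfl⟩ : ∃ j, k = j + 4 := ⟨k - 4, by omega⟩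
    simp only [Nat.reduceSubDiff] at ih ⊢
    have := ih (by omega)
    nlinarith [Nat.zero_le (j ^ 3)]

theorem six_mul_pow_three_mul_le {k : ℕ} (hk : 3 ≤ k) :
    6 * k ^ 3 * (k - 2) ≤ 3 * k * (2 * k).choose k := by
  rw [← Nat.centralBinom_eq_two_mul_choose]
  calc 6 * k ^ 3 * (k - 2) = 3 * k * (2 * k ^ 2 * (k - 2)) := by ring
    _ ≤ 3 * k * k.centralBinom :=
      Nat.mul_le_mul_left _ (two_mul_sq_mul_sub_two_le_centralBinom hk)

end Binomials

section SizedFamilies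

variable {α : Type*} [Fintype α] [DecidableEq α] {r : ℕ} {𝒳 : Finset (Finset α)}

theorem card_filter_superset_le (h𝒳 : (𝒳 : Set (Finset α)).Sized r) (p : Finset α) :
    #{S ∈ 𝒳 | p ⊆ S} ≤ (Fintype.card α).choose (r - #p) := by
  by_cases hp : #p ≤ r
  · calc #{S ∈ 𝒳 | p ⊆ S} ≤ #{S ∈ powersetCard r univ | p ⊆ S} :=
          card_le_card (filter_subset_filter _ h𝒳.subset_powersetCard_univ)
      _ = (Fintype.card α - #p).choose (r - #p) := by
          rw [card_filter_powersetCard_subset _ _ _ (subset_univ p) hp, card_univ]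
      _ ≤ (Fintype.card α).choose (r - #p) := Nat.choose_le_choose _ (Nat.sub_le _ _)
  · rw [filter_eq_empty_iff.mpr fun S hS hpS ↦ hp (h𝒳 hS ▸ card_le_card hpS), card_empty]
    exact Nat.zero_le _

theorem card_filter_not_disjoint_le (h𝒳 : (𝒳 : Set (Finset α)).Sized r) (T : Finset α) :
    #{S ∈ 𝒳 | ¬ Disjoint S T} ≤ #T * (Fintype.card α).choose (r - 1) := by
  have hcover : {S ∈ 𝒳 | ¬ Disjoint S T} ⊆ T.biUnion fun x ↦ {S ∈ 𝒳 | {x} ⊆ S} := by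
    intro S hS
    obtain ⟨hS, hST⟩ := mem_filter.mp hS
    obtain ⟨x, hxS, hxT⟩ := not_disjoint_iff.mp hST
    exact mem_biUnion.mpr ⟨x, hxT, mem_filter.mpr ⟨hS, singleton_subset_iff.mpr hxS⟩⟩
  exact (card_le_card hcover).trans
    (card_biUnion_le_card_mul _ _ _ fun x _ ↦ card_filter_superset_le h𝒳 {x})

end SizedFamilies

section Levels

variable {α : Type*} [DecidableEq α] {r b : ℕ} {𝒢 : Finset (Finset α)} {D : Finset α}

theorem card_inter_lt_card_iff_not_subset {S : Finset α} : #(S ∩ D) < #S ↔ ¬ S ⊆ D :=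
  ⟨fun hlt hSD ↦ hlt.ne (by rw [inter_eq_left.mpr hSD]),
    fun hSD ↦ card_lt_card (inf_lt_left.mpr hSD)⟩

/-- The points of `D` that extend `E` to a member of `𝒢`. When `E` is disjoint from `D`, they
correspond to the members of `𝒢` that consist of `E` and a single point of `D`. -/
def fiber (𝒢 : Finset (Finset α)) (D E : Finset α) : Finset α :=
  {c ∈ D | insert c E ∈ 𝒢}

theorem mem_fiber {E : Finset α} {c : α} : c ∈ fiber 𝒢 D E ↔ c ∈ D ∧ insert c E ∈ 𝒢 :=
  mem_filter

variable [Fintype α]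

theorem card_filter_card_inter_eq_zero_add_le (h𝒢 : (𝒢 : Set (Finset α)).Sized r) :
    #{G ∈ 𝒢 | #(G ∩ D) = 0} + #(powersetCard r Dᶜ \ 𝒢) ≤ (#Dᶜ).choose r := by
  have hsub : {G ∈ 𝒢 | #(G ∩ D) = 0} ⊆ powersetCard r Dᶜ ∩ 𝒢 := by
    intro G hG
    obtain ⟨hG, hGD⟩ := mem_filter.mp hG
    rw [card_eq_zero, ← disjoint_iff_inter_eq_empty, ← subset_compl_iff_disjoint_right] at hGD
    exact mem_inter.mpr ⟨mem_powersetCard.mpr ⟨hGD, h𝒢 hG⟩, hG⟩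
  rw [← card_powersetCard, ← card_inter_add_card_sdiff (powersetCard r Dᶜ) 𝒢]
  exact Nat.add_le_add_right (card_le_card hsub) _

theorem card_filter_card_inter_eq_one_le (h𝒢 : (𝒢 : Set (Finset α)).Sized r) :
    #{G ∈ 𝒢 | #(G ∩ D) = 1} ≤ ∑ E ∈ powersetCard (r - 1) Dᶜ, #(fiber 𝒢 D E) := by
  have hcover : {G ∈ 𝒢 | #(G ∩ D) = 1} ⊆
      (powersetCard (r - 1) Dᶜ).biUnion fun E ↦ (fiber 𝒢 D E).image (insert · E) := by
    intro G hG
    obtain ⟨hG, hGD⟩ := mem_filter.mp hG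
    have hcard : #(G \ D) = r - 1 := by
      have := card_sdiff_add_card_inter G D
      have := h𝒢 hG
      omega
    obtain ⟨c, hc⟩ := card_eq_one.mp hGD
    have hGc : insert c (G \ D) = G := by
      rw [insert_eq, ← hc, union_comm, sdiff_union_inter]
    have hcD : c ∈ D := (mem_inter.mp (hc ▸ mem_singleton_self c)).2
    refine mem_biUnion.mpr ⟨G \ D, mem_powersetCard.mpr ⟨?_, hcard⟩, mem_image.mpr ⟨c, ?_, hGc⟩⟩
    · exact subset_compl_iff_disjoint_right.mpr sdiff_disjoint
    · exact mem_fiber.mpr ⟨hcD, by rwa [hGc]⟩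
  exact (card_le_card hcover).trans (card_biUnion_le.trans (sum_le_sum fun _ _ ↦ card_image_le))

theorem card_filter_two_le_card_inter_le (h𝒢 : (𝒢 : Set (Finset α)).Sized r) :
    #{G ∈ 𝒢 | 2 ≤ #(G ∩ D)} ≤ (#D).choose 2 * (Fintype.card α).choose (r - 2) := by
  have hcover : {G ∈ 𝒢 | 2 ≤ #(G ∩ D)} ⊆
      (powersetCard 2 D).biUnion fun p ↦ {G ∈ 𝒢 | p ⊆ G} := by
    intro G hG
    obtain ⟨hG, hGD⟩ := mem_filter.mp hG
    obtain ⟨p, hp, hpcard⟩ := exists_subset_card_eq hGD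
    exact mem_biUnion.mpr ⟨p, mem_powersetCard.mpr ⟨hp.trans inter_subset_right, hpcard⟩,
      mem_filter.mpr ⟨hG, hp.trans inter_subset_left⟩⟩
  rw [← card_powersetCard]
  refine (card_le_card hcover).trans (card_biUnion_le_card_mul _ _ _ fun p hp ↦ ?_)
  rw [← (mem_powersetCard.mp hp).2]
  exact card_filter_superset_le h𝒢 p

theorem sum_card_fiber_add_le (hb : ∀ E ∈ powersetCard r Dᶜ, #(fiber 𝒢 D E) ≤ b) :
    ∑ E ∈ powersetCard r Dᶜ, #(fiber 𝒢 D E) + #{E ∈ powersetCard r Dᶜ | #(fiber 𝒢 D E) < b} ≤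
      b * (#Dᶜ).choose r := by
  rw [card_filter, ← sum_add_distrib, mul_comm, ← card_powersetCard, ← smul_eq_mul]
  refine sum_le_card_nsmul _ _ _ fun E hE ↦ ?_
  have := hb E hE
  split_ifs <;> omega

theorem card_add_card_sdiff_add_card_filter_le (h𝒢 : (𝒢 : Set (Finset α)).Sized r)
    (hb : ∀ E ∈ powersetCard (r - 1) Dᶜ, #(fiber 𝒢 D E) ≤ b) :
    #𝒢 + #(powersetCard r Dᶜ \ 𝒢) + #{E ∈ powersetCard (r - 1) Dᶜ | #(fiber 𝒢 D E) < b} ≤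
      (#Dᶜ).choose r + b * (#Dᶜ).choose (r - 1) +
        (#D).choose 2 * (Fintype.card α).choose (r - 2) := by
  have hsplit : 𝒢 = {G ∈ 𝒢 | #(G ∩ D) = 0} ∪ {G ∈ 𝒢 | #(G ∩ D) = 1} ∪
      {G ∈ 𝒢 | 2 ≤ #(G ∩ D)} := by
    rw [← filter_or, ← filter_or, eq_comm, filter_eq_self]
    omega
  have hunion := card_union_le ({G ∈ 𝒢 | #(G ∩ D) = 0} ∪ {G ∈ 𝒢 | #(G ∩ D) = 1})
    {G ∈ 𝒢 | 2 ≤ #(G ∩ D)}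
  have hunion' := card_union_le {G ∈ 𝒢 | #(G ∩ D) = 0} {G ∈ 𝒢 | #(G ∩ D) = 1}
  rw [← hsplit] at hunion
  have hzero := card_filter_card_inter_eq_zero_add_le (D := D) h𝒢
  have hone := card_filter_card_inter_eq_one_le (D := D) h𝒢
  have htwo := card_filter_two_le_card_inter_le (D := D) h𝒢
  have hfiber := sum_card_fiber_add_le hb
  omega

end Levels

section ThreewiseCondIntersecting

variable {α : Type*} [DecidableEq α] {k : ℕ} {F : Finset (Finset α)} {A B : Finset α}

/-- `(3, s)`-conditional intersection over an arbitrary type, in the form that is applied: any three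
distinct members whose union has size at most `s` have a common point. -/
def ThreewiseCondIntersecting (s : ℕ) (F : Finset (Finset α)) : Prop :=
  ∀ ⦃S⦄, S ∈ F → ∀ ⦃T⦄, T ∈ F → ∀ ⦃R⦄, R ∈ F → S ≠ T → S ≠ R → T ≠ R →
    #(S ∪ T ∪ R) ≤ s → ∃ x ∈ S, x ∈ T ∧ x ∈ R

theorem CondIntersecting.threewise {n s : ℕ} {F : Finset (Finset (Fin n))}
    (hF : CondIntersecting 3 s F) : ThreewiseCondIntersecting s F := by
  intro S hS T hT R hR hST hSR hTR hcard
  by_contra! hempty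
  refine hF ⟨{S, T, R}, ?_, card_eq_three.mpr ⟨S, T, R, hST, hSR, hTR, rfl⟩, ?_, ?_⟩
  · simp only [insert_subset_iff, singleton_subset_iff, hS, hT, hR, and_self]
  · simpa only [sup_insert, sup_singleton, id_eq, sup_eq_union, ← union_assoc] using hcard
  · simp only [inf_insert, inf_singleton, id_eq, inf_eq_inter, eq_empty_iff_forall_notMem,
      mem_inter]
    rintro x ⟨hxS, hxT, hxR⟩
    exact hempty x hxS hxT hxR

theorem ThreewiseCondIntersecting.exists_mem_of_subset_insert
    (hI : ThreewiseCondIntersecting (2 * k) F) (hF : (F : Set (Finset α)).Sized k)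
    {S T R E : Finset α} {p q : α} (hS : S ∈ F) (hT : T ∈ F) (hR : R ∈ F)
    (hST : S ≠ T) (hSR : S ≠ R) (hTR : T ≠ R) (hE : #E + 2 ≤ k)
    (hSW : S ⊆ insert p (insert q (R ∪ E))) (hTW : T ⊆ insert p (insert q (R ∪ E))) :
    ∃ x ∈ S, x ∈ T ∧ x ∈ R := by
  have hRW : R ⊆ insert p (insert q (R ∪ E)) :=
    subset_union_left.trans ((subset_insert _ _).trans (subset_insert _ _))
  refine hI hS hT hR hST hSR hTR ((card_le_card (union_subset (union_subset hSW hTW) hRW)).trans ?_)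
  have := card_insert_le p (insert q (R ∪ E))
  have := card_insert_le q (R ∪ E)
  have := card_union_le R E
  have := hF hR
  omega

/-- `A` and `B` are disjoint members of the `k`-uniform, `(3, 2k)`-conditionally intersecting
family `F`; this is the configuration on which the whole argument runs. -/
structure DisjointPair (k : ℕ) (F : Finset (Finset α)) (A B : Finset α) : Prop where
  sized : (F : Set (Finset α)).Sized k
  threewise : ThreewiseCondIntersecting (2 * k) F
  left_mem : A ∈ F
  right_mem : B ∈ F
  disjoint : Disjoint A B

theorem DisjointPair.symm (h : DisjointPair k F A B) : DisjointPair k F B A :=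
  { h with left_mem := h.right_mem, right_mem := h.left_mem, disjoint := h.disjoint.symm }

theorem DisjointPair.card_union (h : DisjointPair k F A B) : #(A ∪ B) = 2 * k := by
  rw [card_union_of_disjoint h.disjoint, h.sized h.left_mem, h.sized h.right_mem, two_mul]

theorem DisjointPair.card_compl_union [Fintype α] (h : DisjointPair k F A B) :
    #(A ∪ B)ᶜ = Fintype.card α - 2 * k := by
  rw [card_compl, h.card_union]

end ThreewiseCondIntersecting

section OwnSubsets

variable {α : Type*} [DecidableEq α] {k : ℕ} {F : Finset (Finset α)} {g : Finset α → Finset α}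
  {C E : Finset α} {c d x y : α}

/-- `g` selects from every member of `F` a subset of size `k - 1` that lies in no other member. -/
structure OwnSubsets (k : ℕ) (F : Finset (Finset α)) (g : Finset α → Finset α) : Prop where
  subset : ∀ ⦃S⦄, S ∈ F → g S ⊆ S
  card_eq : ∀ ⦃S⦄, S ∈ F → #(g S) = k - 1
  eq_of_subset : ∀ ⦃S⦄, S ∈ F → ∀ ⦃T⦄, T ∈ F → g S ⊆ T → T = S

theorem OwnSubsets.sized_image (hg : OwnSubsets k F g) :
    ((F.image g : Finset (Finset α)) : Set (Finset α)).Sized (k - 1) := by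
  intro G hG
  obtain ⟨S, hS, rfl⟩ := mem_image.mp hG
  exact hg.card_eq hS

theorem OwnSubsets.card_image (hg : OwnSubsets k F g) : #(F.image g) = #F :=
  card_image_of_injOn fun _ hS _ hT hST ↦ hg.eq_of_subset hT hS (hST ▸ hg.subset hS)

/-- `x` completes `insert c E` to a member of `F` whose selected subset is `insert c E`. -/
structure Completes (F : Finset (Finset α)) (g : Finset α → Finset α) (E : Finset α) (c x : α) :
    Prop where
  notMem : x ∉ insert c E
  mem : insert x (insert c E) ∈ F
  own_eq : g (insert x (insert c E)) = insert c E

theorem OwnSubsets.exists_completes (hg : OwnSubsets k F g) (hF : (F : Set (Finset α)).Sized k)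
    (hk : 1 ≤ k) (hc : insert c E ∈ F.image g) : ∃ x, Completes F g E c x := by
  obtain ⟨S, hS, hgS⟩ := mem_image.mp hc
  have hcard : #(g S) + 1 = #S := by
    rw [hg.card_eq hS, hF hS, Nat.sub_add_cancel hk]
  obtain ⟨x, hx, hxS⟩ := exists_eq_insert_iff.mpr ⟨hg.subset hS, hcard⟩
  rw [hgS] at hx hxS
  exact ⟨x, hx, hxS ▸ hS, by rw [hxS, hgS]⟩

theorem Completes.notMem_insert_insert (hcx : Completes F g E c x) (hdy : Completes F g E d y)
    (hg : OwnSubsets k F g) (hcE : c ∉ E) (hcd : c ≠ d) : c ∉ insert y (insert d E) := by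
  intro hc
  have hsub : insert c E ⊆ insert y (insert d E) :=
    insert_subset hc ((subset_insert _ _).trans (subset_insert _ _))
  have hST := hg.eq_of_subset hcx.mem hdy.mem (hcx.own_eq.symm ▸ hsub)
  have hcdE : insert c E = insert d E := by rw [← hcx.own_eq, ← hST, hdy.own_eq]
  exact hcd ((mem_insert.mp (hcdE ▸ mem_insert_self c E)).resolve_right hcE)

theorem Completes.insert_notMem_image (hcx : Completes F g E c x) (hg : OwnSubsets k F g) :
    insert x E ∉ F.image g := by
  intro hxE
  obtain ⟨S, hS, hgS⟩ := mem_image.mp hxE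
  have hsub : g S ⊆ insert x (insert c E) :=
    hgS ▸ insert_subset_insert x (subset_insert c E)
  rw [← hg.eq_of_subset hS hcx.mem hsub, hcx.own_eq] at hgS
  exact hcx.notMem (hgS ▸ mem_insert_self x E)

theorem Completes.eq_and_mem_of_subset_insert (hcx : Completes F g E c x)
    (hdy : Completes F g E d y) (hg : OwnSubsets k F g) (hI : ThreewiseCondIntersecting (2 * k) F)
    (hF : (F : Set (Finset α)).Sized k) (hC : C ∈ F) (hE : #E + 2 ≤ k) (hEne : E.Nonempty)
    (hEC : Disjoint E C) (hcE : c ∉ E) (hdE : d ∉ E) (hcd : c ≠ d) {p q : α}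
    (hpq : {c, d, x, y} ⊆ insert p (insert q C)) : x = y ∧ x ∈ C := by
  have hcT := hcx.notMem_insert_insert hdy hg hcE hcd
  have hdS := hdy.notMem_insert_insert hcx hg hdE hcd.symm
  obtain ⟨e, he⟩ := hEne
  have heC := disjoint_left.mp hEC he
  have hne : ∀ {a b}, insert a (insert b E) ≠ C := fun h ↦
    heC (h ▸ mem_insert_of_mem (mem_insert_of_mem he))
  have hW : ∀ {a b}, a ∈ insert p (insert q C) → b ∈ insert p (insert q C) →
      insert a (insert b E) ⊆ insert p (insert q (C ∪ E)) := by
    intro a b ha hb z hz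
    simp only [mem_insert, mem_union] at ha hb hz ⊢
    grind only
  obtain ⟨z, hzS, hzT, hzC⟩ := hI.exists_mem_of_subset_insert hF hcx.mem hdy.mem hC
    (fun h ↦ hcT (h ▸ mem_insert_of_mem (mem_insert_self c E))) hne hne hE
    (hW (hpq (by simp)) (hpq (by simp))) (hW (hpq (by simp)) (hpq (by simp)))
  have hzE := disjoint_right.mp hEC hzC
  have hzc : z ≠ c := fun h ↦ hcT (h ▸ hzT)
  have hzd : z ≠ d := fun h ↦ hdS (h ▸ hzS)
  simp only [mem_insert, hzE, hzc, hzd, or_false] at hzS hzT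
  exact ⟨hzS.symm.trans hzT, hzS ▸ hzC⟩

end OwnSubsets

section Fibers

variable {α : Type*} [Fintype α] [DecidableEq α] {k : ℕ} {F : Finset (Finset α)}
  {g : Finset α → Finset α} {A B E : Finset α} {c d x y : α}

theorem Completes.eq_and_mem_of_subset_union (hcx : Completes F g E c x)
    (hdy : Completes F g E d y) (h : DisjointPair k F A B) (hg : OwnSubsets k F g) (hk : 3 ≤ k)
    (hE : E ∈ powersetCard (k - 2) (A ∪ B)ᶜ) (hc : c ∈ A ∪ B) (hd : d ∈ A ∪ B) (hcd : c ≠ d)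
    {C : Finset α} (hC : C ∈ F) (hCD : C ⊆ A ∪ B) {p q : α}
    (hpq : {c, d, x, y} ⊆ insert p (insert q C)) : x = y ∧ x ∈ C := by
  obtain ⟨hED, hEcard⟩ := mem_powersetCard.mp hE
  have hdisj := subset_compl_iff_disjoint_right.mp hED
  exact hcx.eq_and_mem_of_subset_insert hdy hg h.threewise h.sized hC (by omega)
    (card_pos.mp (by omega)) (hdisj.mono_right hCD) (disjoint_right.mp hdisj hc)
    (disjoint_right.mp hdisj hd) hcd hpq

theorem Completes.pair_cases (hcx : Completes F g E c x) (hdy : Completes F g E d y)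
    (h : DisjointPair k F A B) (hg : OwnSubsets k F g) (hk : 3 ≤ k)
    (hE : E ∈ powersetCard (k - 2) (A ∪ B)ᶜ) (hc : c ∈ A ∪ B) (hd : d ∈ A ∪ B) (hcd : c ≠ d) :
    (x = y ∧ ∃ C ∈ ({A, B} : Finset (Finset α)), x ∈ C ∧ c ∈ C ∧ d ∈ C) ∨
      (x ∉ A ∪ B ∧ y ∉ A ∪ B ∧ (c ∈ A ↔ d ∈ B)) := by
  have hA : ∀ p q, {c, d, x, y} ⊆ insert p (insert q A) → x = y ∧ x ∈ A := fun _ _ ↦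
    hcx.eq_and_mem_of_subset_union hdy h hg hk hE hc hd hcd h.left_mem subset_union_left
  have hB : ∀ p q, {c, d, x, y} ⊆ insert p (insert q B) → x = y ∧ x ∈ B := fun _ _ ↦
    hcx.eq_and_mem_of_subset_union hdy h hg hk hE hc hd hcd h.right_mem subset_union_right
  have hAB := disjoint_left.mp h.disjoint
  simp only [insert_subset_iff, singleton_subset_iff, mem_insert, mem_union, mem_singleton,
    exists_eq_or_imp, exists_eq_left] at hA hB hc hd ⊢
  by_cases hxy : x = y
  · subst hxy
    have hcA : c ∈ A → x ∈ A := fun hc ↦ (hA x d (by grind only)).2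
    have hdA : d ∈ A → x ∈ A := fun hd ↦ (hA x c (by grind only)).2
    have hcB : c ∈ B → x ∈ B := fun hc ↦ (hB x d (by grind only)).2
    have hdB : d ∈ B → x ∈ B := fun hd ↦ (hB x c (by grind only)).2
    grind only
  · have hcdA : ¬ (c ∈ A ∧ d ∈ A) := fun hcd ↦ hxy (hA x y (by grind only)).1
    have hcdB : ¬ (c ∈ B ∧ d ∈ B) := fun hcd ↦ hxy (hB x y (by grind only)).1
    have hxA : x ∉ A := fun hx ↦ hc.elim (fun hc ↦ hxy (hA d y (by grind only)).1)
      fun hc ↦ hxy (hA c y (by grind only)).1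
    have hxB : x ∉ B := fun hx ↦ hc.elim (fun hc ↦ hxy (hB c y (by grind only)).1)
      fun hc ↦ hxy (hB d y (by grind only)).1
    have hyA : y ∉ A := fun hy ↦ hc.elim (fun hc ↦ hxy (hA d x (by grind only)).1)
      fun hc ↦ hxy (hA c x (by grind only)).1
    have hyB : y ∉ B := fun hy ↦ hc.elim (fun hc ↦ hxy (hB c x (by grind only)).1)
      fun hc ↦ hxy (hB d x (by grind only)).1
    grind only

theorem card_fiber_le_two (h : DisjointPair k F A B) (hg : OwnSubsets k F g) (hk : 3 ≤ k)
    (hE : E ∈ powersetCard (k - 2) (A ∪ B)ᶜ) (hc : c ∈ fiber (F.image g) (A ∪ B) E)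
    (hcx : Completes F g E c x) (hx : x ∉ A ∪ B) : #(fiber (F.image g) (A ∪ B) E) ≤ 2 := by
  suffices hsub : #((fiber (F.image g) (A ∪ B) E).erase c) ≤ 1 by
    rw [card_erase_of_mem hc] at hsub
    omega
  rw [card_le_one]
  intro d hd e he
  obtain ⟨hdc, hd⟩ := mem_erase.mp hd
  obtain ⟨hec, he⟩ := mem_erase.mp he
  obtain ⟨y, hdy⟩ := hg.exists_completes h.sized (by omega) (mem_fiber.mp hd).2
  obtain ⟨z, hez⟩ := hg.exists_completes h.sized (by omega) (mem_fiber.mp he).2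
  have hcD := (mem_fiber.mp hc).1
  have hdD := (mem_fiber.mp hd).1
  have heD := (mem_fiber.mp he).1
  by_contra hde
  have hcd := hcx.pair_cases hdy h hg hk hE hcD hdD (Ne.symm hdc)
  have hce := hcx.pair_cases hez h hg hk hE hcD heD (Ne.symm hec)
  have hde := hdy.pair_cases hez h hg hk hE hdD heD hde
  have hAB := disjoint_left.mp h.disjoint
  simp only [mem_insert, mem_union, mem_singleton, exists_eq_or_imp, exists_eq_left]
    at hx hcD hdD heD hcd hce hde
  grind only

theorem exists_subset_of_completes (hg : OwnSubsets k F g) (hk : 2 ≤ k)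
    (hE : E ∈ powersetCard (k - 2) (A ∪ B)ᶜ) (hcx : Completes F g E c x) (hx : x ∉ A ∪ B) :
    ∃ G ∈ powersetCard (k - 1) (A ∪ B)ᶜ \ F.image g, E ⊆ G := by
  obtain ⟨hED, hEcard⟩ := mem_powersetCard.mp hE
  have hxE : x ∉ E := fun hxE ↦ hcx.notMem (mem_insert_of_mem hxE)
  refine ⟨insert x E, mem_sdiff.mpr ⟨mem_powersetCard.mpr ⟨?_, ?_⟩,
    hcx.insert_notMem_image hg⟩, subset_insert x E⟩
  · exact insert_subset (mem_compl.mpr hx) hED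
  · rw [card_insert_of_notMem hxE]
    omega

theorem fiber_subset_erase (h : DisjointPair k F A B) (hg : OwnSubsets k F g) (hk : 3 ≤ k)
    (hE : E ∈ powersetCard (k - 2) (A ∪ B)ᶜ) (hfiber : 1 < #(fiber (F.image g) (A ∪ B) E))
    (hinside : ∀ c ∈ fiber (F.image g) (A ∪ B) E, ∀ x, Completes F g E c x → x ∈ A ∪ B) :
    ∃ C ∈ ({A, B} : Finset (Finset α)), ∃ u ∈ C, ∀ c ∈ fiber (F.image g) (A ∪ B) E,
      c ∈ C.erase u ∧ insert u (insert c E) ∈ F := by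
  have hpair : ∀ {c d x y}, c ∈ fiber (F.image g) (A ∪ B) E → d ∈ fiber (F.image g) (A ∪ B) E →
      Completes F g E c x → Completes F g E d y → c ≠ d →
      x = y ∧ ∃ C ∈ ({A, B} : Finset (Finset α)), x ∈ C ∧ c ∈ C ∧ d ∈ C :=
    fun hc hd hcx hdy hcd ↦ (hcx.pair_cases hdy h hg hk hE (mem_fiber.mp hc).1
      (mem_fiber.mp hd).1 hcd).resolve_right fun hout ↦ hout.1 (hinside _ hc _ hcx)
  obtain ⟨c, hc, d, hd, hcd⟩ := one_lt_card.mp hfiber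
  obtain ⟨u, hcu⟩ := hg.exists_completes h.sized (by omega) (mem_fiber.mp hc).2
  obtain ⟨y, hdy⟩ := hg.exists_completes h.sized (by omega) (mem_fiber.mp hd).2
  obtain ⟨-, C, hC, huC, hcC, -⟩ := hpair hc hd hcu hdy hcd
  have hunique : ∀ C' ∈ ({A, B} : Finset (Finset α)), u ∈ C' → C' = C := by
    have hAB := disjoint_left.mp h.disjoint
    grind only [mem_insert, mem_singleton]
  refine ⟨C, hC, u, huC, fun e he ↦ ?_⟩
  obtain ⟨heC, heu⟩ : e ∈ C ∧ Completes F g E e u := by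
    obtain rfl | hce := eq_or_ne c e
    · exact ⟨hcC, hcu⟩
    · obtain ⟨z, hez⟩ := hg.exists_completes h.sized (by omega) (mem_fiber.mp he).2
      obtain ⟨rfl, C', hC', huC', -, heC'⟩ := hpair hc he hcu hez hce
      exact ⟨hunique C' hC' huC' ▸ heC', hez⟩
  exact ⟨mem_erase.mpr ⟨fun h ↦ heu.notMem (h ▸ mem_insert_self e E), heC⟩, heu.mem⟩

/-- The `(k - 2)`-subsets `E` of the complement of `D` such that every `E ∪ {u, a}` with
`a ∈ C \ {u}` belongs to `F`: the sets at which a fiber attains its maximal size `k - 1`. -/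
def stars (k : ℕ) (F : Finset (Finset α)) (D C : Finset α) (u : α) : Finset (Finset α) :=
  {E ∈ powersetCard (k - 2) Dᶜ | ∀ a ∈ C.erase u, insert u (insert a E) ∈ F}

theorem fiber_cases (h : DisjointPair k F A B) (hg : OwnSubsets k F g) (hk : 3 ≤ k)
    (hE : E ∈ powersetCard (k - 2) (A ∪ B)ᶜ) :
    #(fiber (F.image g) (A ∪ B) E) ≤ k - 1 ∧ (#(fiber (F.image g) (A ∪ B) E) < k - 1 ∨
      (∃ G ∈ powersetCard (k - 1) (A ∪ B)ᶜ \ F.image g, E ⊆ G) ∨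
      ∃ C ∈ ({A, B} : Finset (Finset α)), ∃ u ∈ C, E ∈ stars k F (A ∪ B) C u) := by
  by_cases hfiber : #(fiber (F.image g) (A ∪ B) E) ≤ 1
  · omega
  by_cases! hout : ∃ c ∈ fiber (F.image g) (A ∪ B) E, ∃ x, Completes F g E c x ∧ x ∉ A ∪ B
  · obtain ⟨c, hc, x, hcx, hx⟩ := hout
    have := card_fiber_le_two h hg hk hE hc hcx hx
    exact ⟨by omega, Or.inr (Or.inl (exists_subset_of_completes hg (by omega) hE hcx hx))⟩
  obtain ⟨C, hC, u, hu, hCu⟩ := fiber_subset_erase h hg hk hE (by omega) hout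
  have hsub : fiber (F.image g) (A ∪ B) E ⊆ C.erase u := fun c hc ↦ (hCu c hc).1
  have hCcard : #(C.erase u) = k - 1 := by
    rw [card_erase_of_mem hu]
    obtain rfl | hC := mem_insert.mp hC
    · rw [h.sized h.left_mem]
    · rw [mem_singleton.mp hC, h.sized h.right_mem]
  refine ⟨hCcard ▸ card_le_card hsub, or_iff_not_imp_left.mpr fun hfull ↦
    Or.inr ⟨C, hC, u, hu, mem_filter.mpr ⟨hE, fun a ha ↦ ?_⟩⟩⟩
  have heq := eq_of_subset_of_card_le hsub (by omega)
  exact (hCu a (heq ▸ ha)).2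

end Fibers

section Stars

variable {α : Type*} [Fintype α] [DecidableEq α] {k : ℕ} {F : Finset (Finset α)}
  {g : Finset α → Finset α} {A B D C T X : Finset α} {u y : α}

theorem mem_stars {E : Finset α} : E ∈ stars k F D C u ↔
    E ∈ powersetCard (k - 2) Dᶜ ∧ ∀ a ∈ C.erase u, insert u (insert a E) ∈ F :=
  mem_filter

theorem sized_stars : ((stars k F D C u : Finset (Finset α)) : Set (Finset α)).Sized (k - 2) :=
  fun _ hE ↦ (mem_powersetCard.mp (mem_stars.mp hE).1).2

theorem card_add_card_unused_add_card_deficient_le (h : DisjointPair k F A B)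
    (hg : OwnSubsets k F g) (hk : 3 ≤ k) :
    #F + #(powersetCard (k - 1) (A ∪ B)ᶜ \ F.image g) +
        #{E ∈ powersetCard (k - 2) (A ∪ B)ᶜ | #(fiber (F.image g) (A ∪ B) E) < k - 1} ≤
      (Fintype.card α - 2 * k).choose (k - 1) +
        (k - 1) * (Fintype.card α - 2 * k).choose (k - 2) +
        (2 * k).choose 2 * (Fintype.card α).choose (k - 3) := by
  have hcount := card_add_card_sdiff_add_card_filter_le (D := A ∪ B) hg.sized_image
    fun E hE ↦ (fiber_cases h hg hk hE).1
  rwa [hg.card_image, h.card_union, h.card_compl_union] at hcount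

theorem choose_le_card_deficient_add (h : DisjointPair k F A B) (hg : OwnSubsets k F g)
    (hk : 3 ≤ k) {M : ℕ}
    (hM : ∀ C ∈ ({A, B} : Finset (Finset α)), ∀ u ∈ C, #(stars k F (A ∪ B) C u) ≤ M) :
    (Fintype.card α - 2 * k).choose (k - 2) ≤
      #{E ∈ powersetCard (k - 2) (A ∪ B)ᶜ | #(fiber (F.image g) (A ∪ B) E) < k - 1} +
        (k - 1) * #(powersetCard (k - 1) (A ∪ B)ᶜ \ F.image g) + 2 * k * M := by
  set U := powersetCard (k - 1) (A ∪ B)ᶜ \ F.image g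
  set Y := {E ∈ powersetCard (k - 2) (A ∪ B)ᶜ | #(fiber (F.image g) (A ∪ B) E) < k - 1}
  set P : Finset (Finset α) := {A, B}
  set Z := P.biUnion fun C ↦ C.biUnion fun u ↦ stars k F (A ∪ B) C u
  have hcover : powersetCard (k - 2) (A ∪ B)ᶜ ⊆ Y ∪ U.biUnion (powersetCard (k - 2)) ∪ Z := by
    intro E hE
    simp only [mem_union, mem_biUnion, Y, Z, mem_filter]
    obtain hlt | ⟨G, hG, hEG⟩ | ⟨C, hC, u, hu, hEu⟩ := (fiber_cases h hg hk hE).2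
    · exact Or.inl (Or.inl ⟨hE, hlt⟩)
    · exact Or.inl (Or.inr ⟨G, hG, mem_powersetCard.mpr ⟨hEG, (mem_powersetCard.mp hE).2⟩⟩)
    · exact Or.inr ⟨C, hC, u, hu, hEu⟩
  have hUnused : #(U.biUnion (powersetCard (k - 2))) ≤ #U * (k - 1) := by
    refine card_biUnion_le_card_mul _ _ _ fun G hG ↦ ?_
    rw [card_powersetCard, (mem_powersetCard.mp (mem_sdiff.mp hG).1).2,
      show k - 1 = k - 2 + 1 by omega, Nat.choose_succ_self_right]
  have hStars : #Z ≤ 2 * (k * M) := by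
    refine (card_biUnion_le_card_mul _ _ (k * M) fun C hC ↦ ?_).trans
      (Nat.mul_le_mul_right _ card_le_two)
    have hCcard : #C = k := h.sized (insert_subset h.left_mem
      (singleton_subset_iff.mpr h.right_mem) hC)
    exact (card_biUnion_le_card_mul _ _ M (hM C hC)).trans_eq (by rw [hCcard])
  have hcard := card_le_card hcover
  rw [card_powersetCard, h.card_compl_union] at hcard
  have := card_union_le (Y ∪ U.biUnion (powersetCard (k - 2))) Z
  have := card_union_le Y (U.biUnion (powersetCard (k - 2)))
  rw [mul_comm (k - 1), mul_assoc]
  omega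

theorem exists_large_stars (h : DisjointPair k F A B) (hg : OwnSubsets k F g) (hk : 3 ≤ k)
    (hn : 6 * k ^ 3 * (k - 2) ≤ Fintype.card α)
    (hlarge : (Fintype.card α - 2 * k).choose (k - 1) +
      (k - 1) * (Fintype.card α - 2 * k).choose (k - 2) < #F) :
    ∃ C ∈ ({A, B} : Finset (Finset α)), ∃ u ∈ C,
      2 * k ^ 2 * (Fintype.card α).choose (k - 3) ≤ #(stars k F (A ∪ B) C u) := by
  by_contra! hsmall
  have htotal := card_add_card_unused_add_card_deficient_le h hg hk
  have hcover := choose_le_card_deficient_add h hg hk fun C hC u hu ↦ (hsmall C hC u hu).le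
  have hnum := mul_choose_add_mul_choose_lt hk hn
  set U := powersetCard (k - 1) (A ∪ B)ᶜ \ F.image g
  set Y := {E ∈ powersetCard (k - 2) (A ∪ B)ᶜ | #(fiber (F.image g) (A ∪ B) E) < k - 1}
  have hYU : (k - 1) * (#Y + #U) ≤ (k - 1) * ((2 * k).choose 2 * (Fintype.card α).choose (k - 3)) :=
    Nat.mul_le_mul_left _ (by omega)
  have hY : #Y ≤ (k - 1) * #Y := Nat.le_mul_of_pos_left _ (by omega)
  rw [mul_add] at hYU
  omega

theorem le_card_stars_filter_disjoint
    (hlarge : 2 * k ^ 2 * (Fintype.card α).choose (k - 3) ≤ #(stars k F D C u)) (hT : #T ≤ k) :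
    (2 * k).choose 2 * (Fintype.card α).choose (k - 3) ≤
      #{X ∈ stars k F D C u | Disjoint X T} := by
  have hmeet : #{X ∈ stars k F D C u | ¬ Disjoint X T} ≤ k * (Fintype.card α).choose (k - 3) :=
    (card_filter_not_disjoint_le sized_stars T).trans (Nat.mul_le_mul_right _ hT)
  have hsplit := card_filter_add_card_filter_not (s := stars k F D C u) (Disjoint · T)
  rw [← choose_two_mul_two_add, add_mul] at hlarge
  omega

theorem insert_insert_notMem_of_mem_stars (h : DisjointPair k F A B) (hk : 2 ≤ k)
    (hX : X ∈ stars k F (A ∪ B) A u) (hT : T ∈ F) (huT : u ∉ T) (hyT : y ∈ T) (hyD : y ∉ A ∪ B)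
    (hXT : Disjoint X T) : insert u (insert y X) ∉ F := by
  intro hS
  obtain ⟨hXpow, hstar⟩ := mem_stars.mp hX
  obtain ⟨-, hXcard⟩ := mem_powersetCard.mp hXpow
  obtain ⟨a, ha, hau⟩ : ∃ a ∈ A, a ≠ u := exists_mem_ne (by rw [h.sized h.left_mem]; omega) u
  have hya : y ≠ a := fun hya ↦ hyD (mem_union_left B (hya ▸ ha))
  have hyu : y ≠ u := fun hyu ↦ huT (hyu ▸ hyT)
  have hyX : y ∉ X := disjoint_right.mp hXT hyT
  obtain ⟨z, hzS, hza, hzT⟩ := h.threewise.exists_mem_of_subset_insert (E := X) (p := u)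
    (q := a) h.sized hS (hstar a (mem_erase.mpr ⟨hau, ha⟩)) hT
    (ne_of_mem_of_not_mem' (mem_insert_of_mem (mem_insert_self y X)) (by simp [hyu, hya, hyX]))
    (ne_of_mem_of_not_mem' (mem_insert_self u _) huT)
    (ne_of_mem_of_not_mem' (mem_insert_self u _) huT)
    (by omega) (by grind only [subset_iff, mem_insert, mem_union])
    (by grind only [subset_iff, mem_insert, mem_union])
  have hzu : z ≠ u := fun hzu ↦ huT (hzu ▸ hzT)
  have hzX : z ∉ X := disjoint_right.mp hXT hzT
  simp only [mem_insert, hzu, hzX, or_false, false_or] at hzS hza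
  exact hya (hzS.symm.trans hza)

theorem erase_subset_of_mem_stars {X' S : Finset α} (h : DisjointPair k F A B) (hk : 3 ≤ k)
    (hX : X ∈ stars k F (A ∪ B) A u) (hX' : X' ∈ stars k F (A ∪ B) A u) (hXX' : Disjoint X X')
    (hu : u ∈ A) (hS : S ∈ F) (hXS : X ⊆ S) (huS : u ∉ S) : A.erase u ⊆ S := by
  intro a ha
  by_contra haS
  obtain ⟨hXpow, hstar⟩ := mem_stars.mp hX
  obtain ⟨hX'pow, hstar'⟩ := mem_stars.mp hX'
  obtain ⟨hXD, hXcard⟩ := mem_powersetCard.mp hXpow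
  obtain ⟨-, hX'card⟩ := mem_powersetCard.mp hX'pow
  obtain ⟨e, he⟩ : X.Nonempty := card_pos.mp (by omega)
  have heA : e ∉ A := fun heA ↦ mem_compl.mp (hXD he) (mem_union_left B heA)
  have hea : e ≠ a := fun hea ↦ heA (hea ▸ mem_of_mem_erase ha)
  have heu : e ≠ u := fun heu ↦ heA (heu ▸ hu)
  have heX' : e ∉ X' := disjoint_left.mp hXX' he
  obtain ⟨z, hz, hz', hzS⟩ := h.threewise.exists_mem_of_subset_insert (E := X') (p := u)
    (q := a) h.sized (hstar a ha) (hstar' a ha) hS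
    (ne_of_mem_of_not_mem' (mem_insert_of_mem (mem_insert_of_mem he)) (by simp [heu, hea, heX']))
    (ne_of_mem_of_not_mem' (mem_insert_self u _) huS)
    (ne_of_mem_of_not_mem' (mem_insert_self u _) huS)
    (by omega) (by grind only [subset_iff, mem_insert, mem_union])
    (by grind only [subset_iff, mem_insert, mem_union])
  have hzu : z ≠ u := fun hzu ↦ huS (hzu ▸ hzS)
  have hza : z ≠ a := fun hza ↦ haS (hza ▸ hzS)
  simp only [mem_insert, hzu, hza, false_or] at hz hz'
  exact disjoint_left.mp hXX' hz hz'

theorem insert_notMem_image_of_mem_stars {X' : Finset α} (h : DisjointPair k F A B)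
    (hg : OwnSubsets k F g) (hk : 3 ≤ k) (hu : u ∈ A) (hX : X ∈ stars k F (A ∪ B) A u)
    (hX' : X' ∈ stars k F (A ∪ B) A u) (hXX' : Disjoint X X') (hT : T ∈ F) (huT : u ∉ T)
    (hyT : y ∈ T) (hyD : y ∉ A ∪ B) (hXT : Disjoint X T) : insert y X ∉ F.image g := by
  intro hyX
  obtain ⟨S, hS, hgS⟩ := mem_image.mp hyX
  have hsub : insert y X ⊆ S := hgS ▸ hg.subset hS
  have hcard : #(insert y X) = k - 1 := hgS ▸ hg.card_eq hS
  have hdisj : Disjoint (insert y X) A := by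
    have hXD := (mem_powersetCard.mp (mem_stars.mp hX).1).1
    exact disjoint_insert_left.mpr ⟨fun hyA ↦ hyD (mem_union_left B hyA),
      (subset_compl_iff_disjoint_right.mp hXD).mono_right subset_union_left⟩
  have hScard := h.sized hS
  by_cases huS : u ∈ S
  · have hSeq : insert u (insert y X) = S := by
      refine eq_of_subset_of_card_le (insert_subset huS hsub) ?_
      rw [card_insert_of_notMem (disjoint_right.mp hdisj hu)]
      omega
    exact insert_insert_notMem_of_mem_stars h (by omega) hX hT huT hyT hyD hXT (hSeq ▸ hS)
  · have hAS := erase_subset_of_mem_stars h hk hX hX' hXX' hu hS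
      ((subset_insert y X).trans hsub) huS
    have hle := card_le_card (union_subset hsub hAS)
    rw [card_union_of_disjoint (hdisj.mono_right (erase_subset u A)), card_erase_of_mem hu,
      h.sized h.left_mem] at hle
    omega

theorem card_le_of_large_stars (h : DisjointPair k F A B) (hg : OwnSubsets k F g) (hk : 3 ≤ k)
    (hn : k ≤ Fintype.card α) (hu : u ∈ A)
    (hlarge : 2 * k ^ 2 * (Fintype.card α).choose (k - 3) ≤ #(stars k F (A ∪ B) A u))
    (hT : T ∈ F) (huT : u ∉ T) (hTD : ¬ T ⊆ A ∪ B) :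
    #F ≤ (Fintype.card α - 2 * k).choose (k - 1) +
      (k - 1) * (Fintype.card α - 2 * k).choose (k - 2) := by
  obtain ⟨y, hyT, hyD⟩ := not_subset.mp hTD
  set 𝒳 := {X ∈ stars k F (A ∪ B) A u | Disjoint X T}
  have hpos : 0 < (2 * k).choose 2 * (Fintype.card α).choose (k - 3) :=
    Nat.mul_pos (Nat.choose_pos (by omega)) (Nat.choose_pos (by omega))
  have hpartner : ∀ X ∈ 𝒳, ∃ X' ∈ stars k F (A ∪ B) A u, Disjoint X X' := by
    intro X hX
    have hXcard : #X ≤ k := (sized_stars (mem_filter.mp hX).1).trans_le (Nat.sub_le k 2)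
    obtain ⟨X', hX'⟩ := card_pos.mp (hpos.trans_le (le_card_stars_filter_disjoint hlarge hXcard))
    exact ⟨X', (mem_filter.mp hX').1, (mem_filter.mp hX').2.symm⟩
  have hyX : ∀ X ∈ 𝒳, y ∉ X := fun X hX ↦ disjoint_right.mp (mem_filter.mp hX).2 hyT
  have hmaps : ∀ X ∈ 𝒳, insert y X ∈ powersetCard (k - 1) (A ∪ B)ᶜ \ F.image g := by
    intro X hX
    obtain ⟨X', hX', hXX'⟩ := hpartner X hX
    obtain ⟨hXstar, hXT⟩ := mem_filter.mp hX
    obtain ⟨hXD, hXcard⟩ := mem_powersetCard.mp (mem_stars.mp hXstar).1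
    refine mem_sdiff.mpr ⟨mem_powersetCard.mpr ⟨insert_subset (mem_compl.mpr hyD) hXD, ?_⟩,
      insert_notMem_image_of_mem_stars h hg hk hu hXstar hX' hXX' hT huT hyT hyD hXT⟩
    rw [card_insert_of_notMem (hyX X hX)]
    omega
  have hinj : Set.InjOn (insert y) (𝒳 : Set (Finset α)) := by
    intro X hX X' hX' heq
    rw [← erase_insert (hyX X hX), heq, erase_insert (hyX X' hX')]
  have hunused := card_le_card_of_injOn _ hmaps hinj
  have hlargeT : _ ≤ #𝒳 := le_card_stars_filter_disjoint hlarge (h.sized hT).le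
  have := card_add_card_unused_add_card_deficient_le h hg hk
  omega

end Stars

section Pencils

variable {α : Type*} [DecidableEq α] {k j : ℕ} {F : Finset (Finset α)}
  {A B S T : Finset α} {u : α}

theorem card_filter_sdiff_subset_le (hF : (F : Set (Finset α)).Sized k) (hj : j ≤ k) :
    #{S ∈ F | #(S ∩ B) = j ∧ S \ B ⊆ T} ≤ (#T).choose (k - j) * (#B).choose j := by
  rw [← card_powersetCard, ← card_powersetCard, ← card_product]
  refine card_le_card_of_injOn (fun S ↦ (S \ B, S ∩ B)) (fun S hS ↦ ?_) fun S _ S' _ heq ↦ ?_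
  · obtain ⟨hS, hcard, hST⟩ := mem_filter.mp hS
    have hsplit := card_sdiff_add_card_inter S B
    have hScard := hF hS
    have hdiff : #(S \ B) = k - j := by omega
    exact mem_product.mpr ⟨mem_powersetCard.mpr ⟨hST, hdiff⟩,
      mem_powersetCard.mpr ⟨inter_subset_right, hcard⟩⟩
  · obtain ⟨hsdiff, hinter⟩ := Prod.mk.inj heq
    rw [← sdiff_union_inter S B, hsdiff, hinter, sdiff_union_inter]

variable [Fintype α]

theorem ThreewiseCondIntersecting.notMem_of_sdiff_subset
    (hI : ThreewiseCondIntersecting (2 * k) F) (hB : B ∈ F) (hBcard : #B = k)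
    (hT : T ∈ powersetCard k Bᶜ) (hS : S ∈ F) (hne : S ≠ B) (hmeet : ¬ Disjoint S B)
    (hST : S \ B ⊆ T) : T ∉ F := by
  intro hTF
  obtain ⟨hTB, hTcard⟩ := mem_powersetCard.mp hT
  have hTBdisj := subset_compl_iff_disjoint_right.mp hTB
  have hTne : T ≠ B := by
    rintro rfl
    exact hmeet (disjoint_self.mp hTBdisj ▸ disjoint_bot_right)
  have hunion : S ∪ T ∪ B ⊆ T ∪ B := by
    rw [union_assoc, union_subset_iff]
    exact ⟨subset_union_left.trans (sdiff_union_self_eq_union.ge.trans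
      (union_subset_union_left hST)), subset_rfl⟩
  obtain ⟨z, -, hzT, hzB⟩ := hI hS hTF hB (fun hST ↦ hmeet (hST ▸ hTBdisj)) hne hTne
    ((card_le_card hunion).trans ((card_union_le T B).trans (by omega)))
  exact disjoint_left.mp hTBdisj hzT hzB

theorem card_filter_powersetCard_sdiff_subset (hn : 2 * k ≤ Fintype.card α) (hS : #S = k)
    (hB : #B = k) (hj : #(S ∩ B) = j) :
    #{T ∈ powersetCard k Bᶜ | S \ B ⊆ T} = (Fintype.card α - 2 * k + j).choose j := by
  have hsplit := card_sdiff_add_card_inter S B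
  rw [card_filter_powersetCard_subset _ _ _ (subset_compl_iff_disjoint_right.mpr sdiff_disjoint)
    (by omega), card_compl]
  congr 1 <;> omega

-- Double counting of the pairs `S \ B ⊆ T`: a set `S` has `(n - 2k + j).choose j` partners
-- `T`, none of them in `F`, and a set `T` has at most `(k.choose j) ^ 2` partners `S`.
theorem mul_card_filter_card_inter_eq_le (hI : ThreewiseCondIntersecting (2 * k) F)
    (hF : (F : Set (Finset α)).Sized k) (hB : B ∈ F) (hu : u ∉ B)
    (hn : k ^ 3 + 2 * k ≤ Fintype.card α + 1) (hj : 1 ≤ j) (hjk : j ≤ k) :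
    k * #{S ∈ F | u ∈ S ∧ #(S ∩ B) = j} ≤ #{T ∈ powersetCard k Bᶜ | u ∈ T ∧ T ∉ F} := by
  set 𝒮 := {S ∈ F | u ∈ S ∧ #(S ∩ B) = j}
  set 𝒯 := {T ∈ powersetCard k Bᶜ | u ∈ T ∧ T ∉ F}
  have hk3 : k ≤ k ^ 3 := Nat.le_self_pow (by decide) k
  have habove : ∀ S ∈ 𝒮, (Fintype.card α - 2 * k + j).choose j ≤
      #(bipartiteAbove (fun S T ↦ S \ B ⊆ T) 𝒯 S) := by
    intro S hS
    obtain ⟨hSF, huS, hSB⟩ := mem_filter.mp hS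
    rw [← card_filter_powersetCard_sdiff_subset (by omega) (hF hSF) (hF hB) hSB]
    refine card_le_card fun T hT ↦ ?_
    obtain ⟨hT, hST⟩ := mem_filter.mp hT
    have hmeet : ¬ Disjoint S B := by
      rw [disjoint_iff_inter_eq_empty, ← card_eq_zero]
      omega
    have hTF := hI.notMem_of_sdiff_subset hB (hF hB) hT hSF (ne_of_mem_of_not_mem' huS hu) hmeet hST
    exact mem_filter.mpr
      ⟨mem_filter.mpr ⟨hT, hST (mem_sdiff.mpr ⟨huS, hu⟩), hTF⟩, hST⟩
  have hbelow : ∀ T ∈ 𝒯, #(bipartiteBelow (fun S T ↦ S \ B ⊆ T) 𝒮 T) ≤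
      k.choose j * k.choose j := by
    intro T hT
    have hTcard := (mem_powersetCard.mp (mem_filter.mp hT).1).2
    have hle := card_filter_sdiff_subset_le (B := B) (T := T) hF hjk
    rw [hTcard, hF hB, Nat.choose_symm hjk] at hle
    refine (card_le_card fun S hS ↦ ?_).trans hle
    obtain ⟨hS, hST⟩ := mem_filter.mp hS
    obtain ⟨hSF, -, hSB⟩ := mem_filter.mp hS
    exact mem_filter.mpr ⟨hSF, hSB, hST⟩
  have hdouble := card_mul_le_card_mul _ habove hbelow
  refine Nat.le_of_mul_le_mul_right (c := k.choose j * k.choose j) ?_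
    (Nat.mul_pos (Nat.choose_pos hjk) (Nat.choose_pos hjk))
  calc k * #𝒮 * (k.choose j * k.choose j) = #𝒮 * (k * (k.choose j * k.choose j)) := by ring
    _ ≤ #𝒮 * (Fintype.card α - 2 * k + j).choose j :=
      Nat.mul_le_mul_left _ (mul_choose_mul_choose_le hj (by omega))
    _ ≤ #𝒯 * (k.choose j * k.choose j) := hdouble

theorem card_filter_mem_not_disjoint_le (hI : ThreewiseCondIntersecting (2 * k) F)
    (hF : (F : Set (Finset α)).Sized k) (hB : B ∈ F) (hu : u ∉ B) (hk : 1 ≤ k)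
    (hn : k ^ 3 + 2 * k ≤ Fintype.card α + 1) :
    #{S ∈ F | u ∈ S ∧ ¬ Disjoint S B} ≤ #{T ∈ powersetCard k Bᶜ | u ∈ T ∧ T ∉ F} := by
  have hcover : {S ∈ F | u ∈ S ∧ ¬ Disjoint S B} ⊆
      (Icc 1 k).biUnion fun j ↦ {S ∈ F | u ∈ S ∧ #(S ∩ B) = j} := by
    intro S hS
    obtain ⟨hS, huS, hSB⟩ := mem_filter.mp hS
    rw [disjoint_iff_inter_eq_empty, ← card_eq_zero] at hSB
    have hle : #(S ∩ B) ≤ k := hF hB ▸ card_le_card inter_subset_right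
    exact mem_biUnion.mpr ⟨#(S ∩ B), mem_Icc.mpr ⟨Nat.pos_of_ne_zero hSB, hle⟩,
      mem_filter.mpr ⟨hS, huS, rfl⟩⟩
  refine Nat.le_of_mul_le_mul_left (c := k) ?_ hk
  calc k * #{S ∈ F | u ∈ S ∧ ¬ Disjoint S B}
      ≤ k * ∑ j ∈ Icc 1 k, #{S ∈ F | u ∈ S ∧ #(S ∩ B) = j} :=
        Nat.mul_le_mul_left _ ((card_le_card hcover).trans card_biUnion_le)
    _ ≤ ∑ _j ∈ Icc 1 k, #{T ∈ powersetCard k Bᶜ | u ∈ T ∧ T ∉ F} := by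
        rw [mul_sum]
        exact sum_le_sum fun j hj ↦ mul_card_filter_card_inter_eq_le hI hF hB hu hn
          (mem_Icc.mp hj).1 (mem_Icc.mp hj).2
    _ = k * #{T ∈ powersetCard k Bᶜ | u ∈ T ∧ T ∉ F} := by
        rw [sum_const, Nat.card_Icc, Nat.add_sub_cancel, smul_eq_mul]

theorem card_filter_mem_le (hI : ThreewiseCondIntersecting (2 * k) F)
    (hF : (F : Set (Finset α)).Sized k) (hB : B ∈ F) (hu : u ∉ B) (hk : 1 ≤ k)
    (hn : k ^ 3 + 2 * k ≤ Fintype.card α + 1) :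
    #{S ∈ F | u ∈ S} ≤ (Fintype.card α - k - 1).choose (k - 1) := by
  have hdisj : #{S ∈ F | u ∈ S ∧ Disjoint S B} ≤ #{T ∈ powersetCard k Bᶜ | u ∈ T ∧ T ∈ F} := by
    refine card_le_card fun S hS ↦ ?_
    obtain ⟨hS, huS, hSB⟩ := mem_filter.mp hS
    exact mem_filter.mpr
      ⟨mem_powersetCard.mpr ⟨subset_compl_iff_disjoint_right.mpr hSB, hF hS⟩, huS, hS⟩
  have hmeet := card_filter_mem_not_disjoint_le hI hF hB hu hk hn
  have hcount := card_filter_powersetCard_subset {u} Bᶜ k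
    (singleton_subset_iff.mpr (mem_compl.mpr hu)) (by rwa [card_singleton])
  simp only [singleton_subset_iff, card_singleton, card_compl, hF hB] at hcount
  rw [← hcount, ← card_filter_add_card_filter_not (s := {S ∈ F | u ∈ S}) (Disjoint · B),
    ← card_filter_add_card_filter_not (s := {T ∈ powersetCard k Bᶜ | u ∈ T}) (· ∈ F)]
  simp only [filter_filter]
  exact add_le_add hdisj hmeet

theorem card_filter_not_subset_union_lt_of_forall_mem (h : DisjointPair k F A B) (hk : 1 ≤ k)
    (hn : k ^ 3 + 2 * k ≤ Fintype.card α + 1) (hu : u ∈ A)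
    (hmem : ∀ T ∈ F, ¬ T ⊆ A ∪ B → u ∈ T) :
    #{S ∈ F | ¬ S ⊆ A ∪ B} < (Fintype.card α - k - 1).choose (k - 1) := by
  refine lt_of_lt_of_le (card_lt_card ?_) (card_filter_mem_le h.threewise h.sized h.right_mem
    (disjoint_left.mp h.disjoint hu) hk hn)
  refine (ssubset_iff_of_subset fun S hS ↦ ?_).mpr ⟨A, mem_filter.mpr ⟨h.left_mem, hu⟩, ?_⟩
  · obtain ⟨hS, hSD⟩ := mem_filter.mp hS
    exact mem_filter.mpr ⟨hS, hmem S hS hSD⟩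
  · exact fun hA ↦ (mem_filter.mp hA).2 subset_union_left

end Pencils

section Bound

variable {α : Type*} [Fintype α] [DecidableEq α] {k : ℕ} {F : Finset (Finset α)}
  {g : Finset α → Finset α} {A B : Finset α} {u : α}

theorem card_filter_not_subset_lt_of_card_le (hk : 3 ≤ k) (hn : 2 * k ≤ Fintype.card α)
    (hF : #F ≤ (Fintype.card α - 2 * k).choose (k - 1) +
      (k - 1) * (Fintype.card α - 2 * k).choose (k - 2)) (D : Finset α) :
    #{S ∈ F | ¬ S ⊆ D} < (Fintype.card α - k - 1).choose (k - 1) := by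
  have hlt := choose_add_mul_choose_lt (Fintype.card α - 2 * k) (m := k - 1) (by omega)
  rw [show Fintype.card α - 2 * k + (k - 1) = Fintype.card α - k - 1 by omega,
    Nat.sub_sub] at hlt
  exact (card_filter_le _ _).trans_lt (hF.trans_lt hlt)

theorem card_filter_not_subset_union_lt_of_large_stars (h : DisjointPair k F A B)
    (hg : OwnSubsets k F g) (hk : 3 ≤ k) (hn : k ^ 3 + 2 * k ≤ Fintype.card α + 1) (hu : u ∈ A)
    (hlarge : 2 * k ^ 2 * (Fintype.card α).choose (k - 3) ≤ #(stars k F (A ∪ B) A u)) :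
    #{S ∈ F | ¬ S ⊆ A ∪ B} < (Fintype.card α - k - 1).choose (k - 1) := by
  by_cases! hmem : ∀ T ∈ F, ¬ T ⊆ A ∪ B → u ∈ T
  · exact card_filter_not_subset_union_lt_of_forall_mem h (by omega) hn hu hmem
  · obtain ⟨T, hT, hTD, huT⟩ := hmem
    have hk3 : 1 ≤ k ^ 3 := Nat.one_le_pow _ _ (by omega)
    exact card_filter_not_subset_lt_of_card_le hk (by omega)
      (card_le_of_large_stars h hg hk (by omega) hu hlarge hT huT hTD) _

theorem card_filter_not_subset_union_lt (h : DisjointPair k F A B) (hg : OwnSubsets k F g)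
    (hk : 3 ≤ k) (hn : 6 * k ^ 3 * (k - 2) ≤ Fintype.card α) :
    #{S ∈ F | ¬ S ⊆ A ∪ B} < (Fintype.card α - k - 1).choose (k - 1) := by
  have hn' : k ^ 3 + 2 * k ≤ Fintype.card α := by
    have hk3 : k ≤ k ^ 3 := Nat.le_self_pow (by decide) k
    have hcube : 6 * k ^ 3 ≤ 6 * k ^ 3 * (k - 2) := Nat.le_mul_of_pos_right _ (by omega)
    omega
  obtain hsmall | hlarge := le_or_gt #F ((Fintype.card α - 2 * k).choose (k - 1) +
    (k - 1) * (Fintype.card α - 2 * k).choose (k - 2))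
  · exact card_filter_not_subset_lt_of_card_le hk (by omega) hsmall _
  obtain ⟨C, hC, u, hu, hstars⟩ := exists_large_stars h hg hk hn hlarge
  obtain rfl | hC := mem_insert.mp hC
  · exact card_filter_not_subset_union_lt_of_large_stars h hg hk (by omega) hu hstars
  · obtain rfl := mem_singleton.mp hC
    rw [union_comm] at hstars ⊢
    exact card_filter_not_subset_union_lt_of_large_stars h.symm hg hk (by omega) hu hstars

end Bound

theorem stmt14_general {α : Type*} [Fintype α] [DecidableEq α] {k : ℕ} (hk : 3 ≤ k)
    (hn : 6 * k ^ 3 * (k - 2) ≤ Fintype.card α) {F : Finset (Finset α)}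
    (hF : (F : Set (Finset α)).Sized k) (hI : ThreewiseCondIntersecting (2 * k) F)
    (huniq : ∀ S ∈ F, ∃ G ⊆ S, #G = k - 1 ∧ ∀ T ∈ F, G ⊆ T → T = S)
    {A B : Finset α} (hA : A ∈ F) (hB : B ∈ F) (hAB : Disjoint A B) :
    #{S ∈ F | #(S ∩ (A ∪ B)) ≤ k - 1} ≤ (Fintype.card α - k - 1).choose (k - 1) - 1 ∧
      ∑ i ∈ range k, #{S ∈ F | #(S ∩ (A ∪ B)) = i} ≤
        ∑ i ∈ Icc 1 (k - 1), (Fintype.card α - 2 * k).choose (k - i) * (k - 1).choose (i - 1) := by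
  choose! g hgS hgcard hgeq using huniq
  have h : DisjointPair k F A B := ⟨hF, hI, hA, hB, hAB⟩
  have h2k : 2 * k ≤ Fintype.card α := h.card_union ▸ card_le_univ (A ∪ B)
  have hlt := card_filter_not_subset_union_lt h ⟨hgS, hgcard, hgeq⟩ hk hn
  have hcard : #{S ∈ F | #(S ∩ (A ∪ B)) ≤ k - 1} = #{S ∈ F | ¬ S ⊆ A ∪ B} := by
    refine congrArg card (filter_congr fun S hS ↦ ?_)
    rw [← card_inter_lt_card_iff_not_subset, hF hS]
    omega
  have hsum : ∑ i ∈ range k, #{S ∈ F | #(S ∩ (A ∪ B)) = i} =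
      #{S ∈ F | #(S ∩ (A ∪ B)) ≤ k - 1} := by
    rw [sum_card_fiberwise_eq_card_filter]
    exact congrArg card (filter_congr fun S _ ↦ by rw [mem_range]; omega)
  have hvandermonde := sum_Icc_choose_mul_choose_add_one (Fintype.card α - 2 * k) (k - 1)
  rw [show k - 1 + 1 = k by omega,
    show Fintype.card α - 2 * k + (k - 1) = Fintype.card α - k - 1 by omega] at hvandermonde
  rw [hsum, hcard]
  omega

theorem stmt14 (n k : ℕ) (hk : 3 ≤ k) (hn : 3 * k * (2 * k).choose k ≤ n)
    (F : Finset (Finset (Fin n))) (hunif : ∀ S ∈ F, S.card = k)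
    (hci : CondIntersecting 3 (2 * k) F)
    (huniq : ∀ S ∈ F, ∃ G ⊆ S, G.card = k - 1 ∧ ∀ T ∈ F, G ⊆ T → T = S)
    (A B : Finset (Fin n)) (hA : A ∈ F) (hB : B ∈ F) (hAB : Disjoint A B) :
    (F.filter (fun S => (S ∩ (A ∪ B)).card ≤ k - 1)).card ≤ (n - k - 1).choose (k - 1) - 1 ∧
    ∑ i ∈ Finset.range k, (F.filter (fun S => (S ∩ (A ∪ B)).card = i)).card ≤
      ∑ i ∈ Finset.Icc 1 (k - 1), (n - 2 * k).choose (k - i) * (k - 1).choose (i - 1) := by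
  have hn' := Fintype.card_fin n ▸ (six_mul_pow_three_mul_le hk).trans hn
  simpa only [Fintype.card_fin] using stmt14_general hk hn' hunif hci.threewise huniq hA hB hAB
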